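/- Let h ≥ 2. Under the counting axiom, the number of h-full elements m with N(m) ≤ x equals κ γ_h x^{1/h} + O_h(x^{ν/h}) for some ν < 1, where γ_h = ∏_𝔭 (1 + (N(𝔭) − N(𝔭)^{1/h})/(N(𝔭)^2 (N(𝔭)^{1/h} − 1))). -/

import Mathlib

/-!
Write an `h`-full element uniquely as `m = h • a + b`, where every multiplicity of `b` is `0` or
lies in `[h + 1, 2h - 1]` (a nonzero multiplicity `k` of `m` with `k % h = r > 0` forces the
multiplicity `h + r` in `b`). On the level of Euler factors this is
`(1 - u ^ h) (1 + u ^ h / (1 - u)) = 1 + u ^ (h + 1) + ⋯ + u ^ (2h - 1)`.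
With `A y` the number of elements of norm at most `y`, the number of `h`-full elements of norm at
most `x` is therefore `∑_b A ((x / N b) ^ (1 / h))`.

The counting axiom gives `|A y - κ y| ≤ C' y ^ ν` for *all* `y > 0` and every `ν ∈ [θ, 1]`, since for
`y < 1` one has `A y = 0` and `κ y ≤ κ y ^ ν`. Hence the count differs from
`κ x ^ (1 / h) ∑_b (N b) ^ (-1 / h)` by at most `C' x ^ (ν / h) ∑_b (N b) ^ (-ν / h)`. Both series
converge as soon as `ν (h + 1) / h > 1` (`hasProd_euler`, fed by `summable_norm_rpow`), which is
possible with `ν < 1`, and the first one is the Euler product `γ_h` (`local_factor`).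
-/

open Filter

/-- The norm of an element of the free abelian monoid on `P`. -/
def mnorm {P : Type*} (N : P → ℕ) (m : P →₀ ℕ) : ℕ :=
  m.prod fun p k => N p ^ k

/-! ### Convergence of power sums -/

/-- If at most `K n` of the values `f i` are `≤ n`, then `∑ (f i) ^ (-σ)` converges for `σ > 1`:
group the terms dyadically. -/
lemma summable_of_card_le {ι : Type*} (f : ι → ℕ) (hf : ∀ i, 1 ≤ f i) (K : ℝ)
    (hK : ∀ n : ℕ, 1 ≤ n → ∀ u : Finset ι, (∀ i ∈ u, f i ≤ n) → (u.card : ℝ) ≤ K * n)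
    {σ : ℝ} (hσ : 1 < σ) : Summable fun i => (f i : ℝ) ^ (-σ) := by
  classical
  have hK0 : 0 ≤ K := by simpa using hK 1 le_rfl ∅ (by simp)
  have hq0 : (0 : ℝ) < 2 ^ (1 - σ) := by positivity
  have hq1 : (2 : ℝ) ^ (1 - σ) < 1 := Real.rpow_lt_one_of_one_lt_of_neg (by norm_num) (by linarith)
  have hc : Summable fun j : ℕ => 2 * K * ((2 : ℝ) ^ (1 - σ)) ^ j :=
    (summable_geometric_of_lt_one hq0.le hq1).mul_left _
  refine summable_of_sum_le (c := ∑' j : ℕ, 2 * K * ((2 : ℝ) ^ (1 - σ)) ^ j)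
    (fun i => by positivity) fun u => ?_
  rw [← Finset.sum_fiberwise_of_maps_to (t := u.image fun i => Nat.log 2 (f i))
    (g := fun i => Nat.log 2 (f i)) (fun i hi => Finset.mem_image_of_mem _ hi)]
  refine le_trans (Finset.sum_le_sum fun j _ => ?_)
    (hc.sum_le_tsum _ fun j _ => by positivity)
  have hterm : ∀ i ∈ u.filter (fun i => Nat.log 2 (f i) = j),
      (f i : ℝ) ^ (-σ) ≤ ((2 : ℝ) ^ j) ^ (-σ) := by
    intro i hi
    rw [Finset.mem_filter] at hi
    refine Real.rpow_le_rpow_of_nonpos (by positivity) ?_ (by linarith)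
    have := Nat.pow_log_le_self 2 (x := f i) (by have := hf i; omega)
    rw [hi.2] at this
    exact_mod_cast this
  have hcard := hK (2 ^ (j + 1)) Nat.one_le_two_pow (u.filter fun i => Nat.log 2 (f i) = j) (by
    intro i hi
    rw [Finset.mem_filter] at hi
    have := Nat.lt_pow_succ_log_self (b := 2) (by norm_num) (f i)
    rw [hi.2] at this
    exact this.le)
  refine (Finset.sum_le_card_nsmul _ _ _ hterm).trans ?_
  rw [nsmul_eq_mul]
  refine (mul_le_mul_of_nonneg_right hcard (by positivity)).trans (le_of_eq ?_)
  have h2 : ((2 : ℝ) ^ (1 - σ)) ^ j = (2 : ℝ) ^ j * ((2 : ℝ) ^ j) ^ (-σ) := by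
    rw [sub_eq_add_neg, Real.rpow_add (by norm_num), Real.rpow_one, mul_pow,
      ← Real.rpow_natCast (2 ^ (-σ)), ← Real.rpow_natCast 2 j, ← Real.rpow_mul (by norm_num),
      ← Real.rpow_mul (by norm_num), mul_comm (-σ)]
  rw [h2]
  push_cast
  ring

/-! ### Euler products with finitely many admissible multiplicities -/

lemma prod_finsupp_eq {P : Type*} (u : P → ℝ) (S : Finset ℕ) (T : Finset P) :
    ∏ p ∈ T, ∑ k ∈ S, u p ^ k =
      ∑ b ∈ T.finsupp (fun _ => S), b.prod fun p k => u p ^ k := by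
  classical
  rw [Finset.prod_sum, Finset.finsupp, Finset.sum_map]
  refine Finset.sum_congr rfl fun φ _ => ?_
  rw [Function.Embedding.coeFn_mk,
    Finsupp.prod_of_support_subset (s := T) _ (Finsupp.support_indicator_subset _ _)
      (fun p k => u p ^ k) (by simp), ← Finset.prod_attach T]
  refine Finset.prod_congr rfl fun x _ => ?_
  simp [Finsupp.indicator_apply]

/-- Euler product over the elements of the free monoid with all multiplicities in `S ∋ 0`. -/
lemma hasProd_euler {P : Type*} (u : P → ℝ) (hu : ∀ p, 0 ≤ u p) (S : Finset ℕ) (h0 : 0 ∈ S)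
    (hs : Summable fun p => ∑ k ∈ S.erase 0, u p ^ k) :
    Summable (fun b : {b : P →₀ ℕ // ∀ p, b p ∈ S} => b.1.prod fun p k => u p ^ k) ∧
    HasProd (fun p => ∑ k ∈ S, u p ^ k)
      (∑' b : {b : P →₀ ℕ // ∀ p, b p ∈ S}, b.1.prod fun p k => u p ^ k) := by
  classical
  let B : Finset P → Finset {b : P →₀ ℕ // ∀ p, b p ∈ S} := fun T =>
    (T.finsupp fun _ => S).subtype _
  have hmemB : ∀ T b, b ∈ B T ↔ b.1.support ⊆ T := by
    intro T b
    simp only [B, Finset.mem_subtype, Finset.mem_finsupp_iff]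
    exact ⟨fun h => h.1, fun h => ⟨h, fun i _ => b.2 i⟩⟩
  have hsumB : ∀ T, ∑ b ∈ B T, (b.1.prod fun p k => u p ^ k) = ∏ p ∈ T, ∑ k ∈ S, u p ^ k := by
    intro T
    rw [prod_finsupp_eq]
    refine Finset.sum_subtype_of_mem (fun b : P →₀ ℕ => b.prod fun p k => u p ^ k) ?_
    intro b hb p
    rw [Finset.mem_finsupp_iff] at hb
    by_cases hp : p ∈ T
    · exact hb.2 p hp
    · have : b p = 0 := by
        by_contra h
        exact hp (hb.1 (Finsupp.mem_support_iff.2 h))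
      rwa [this]
  have hnn : ∀ b : {b : P →₀ ℕ // ∀ p, b p ∈ S}, 0 ≤ b.1.prod fun p k => u p ^ k :=
    fun b => Finset.prod_nonneg fun p _ => pow_nonneg (hu p) _
  have hsum : Summable
      (fun b : {b : P →₀ ℕ // ∀ p, b p ∈ S} => b.1.prod fun p k => u p ^ k) := by
    refine summable_of_sum_le (c := Real.exp (∑' p, ∑ k ∈ S.erase 0, u p ^ k)) hnn fun v => ?_
    have hsub : v ⊆ B (v.biUnion fun b => b.1.support) := fun b hb =>
      (hmemB _ _).2 (Finset.subset_biUnion_of_mem (fun b => b.1.support) hb)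
    refine (Finset.sum_le_sum_of_subset_of_nonneg hsub fun b _ _ => hnn b).trans ?_
    rw [hsumB]
    have hg : ∀ p, 0 ≤ ∑ k ∈ S.erase 0, u p ^ k :=
      fun p => Finset.sum_nonneg fun k _ => pow_nonneg (hu p) _
    calc _ ≤ ∏ p ∈ v.biUnion (fun b => b.1.support),
            Real.exp (∑ k ∈ S.erase 0, u p ^ k) := by
          refine Finset.prod_le_prod
            (fun p _ => Finset.sum_nonneg fun k _ => pow_nonneg (hu p) _) fun p _ => ?_
          rw [← Finset.sum_erase_add _ _ h0, pow_zero]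
          exact Real.add_one_le_exp _
      _ ≤ _ := by
          rw [← Real.exp_sum]
          exact Real.exp_le_exp.2 (hs.sum_le_tsum _ fun p _ => hg p)
  refine ⟨hsum, ?_⟩
  have hB : Tendsto B atTop atTop := by
    refine tendsto_atTop_finset_of_monotone (fun T T' hT b hb => ?_)
      fun b => ⟨b.1.support, (hmemB _ _).2 subset_rfl⟩
    exact (hmemB _ _).2 (((hmemB _ _).1 hb).trans hT)
  -- Both `HasSum` and `HasProd` are limits along finite sets; the product over `T` is the sum over
  -- `B T`.
  have := hsum.hasSum
  simp only [HasSum, HasProd, SummationFilter.unconditional_filter] at this ⊢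
  refine (this.comp hB).congr fun T => ?_
  exact hsumB T

/-- The local factor of `γ_h` is the finite Euler factor `1 + u ^ (h + 1) + ⋯ + u ^ (2h - 1)` at
`u = n ^ (-1 / h)`. -/
lemma local_factor (n h : ℕ) (hn : 1 < n) (hh : 2 ≤ h) :
    ∑ k ∈ insert 0 (Finset.Ico (h + 1) (2 * h)), ((n : ℝ) ^ (-(1 / (h : ℝ)))) ^ k =
      1 + ((n : ℝ) - (n : ℝ) ^ (1 / (h : ℝ)))
              / ((n : ℝ) ^ 2 * ((n : ℝ) ^ (1 / (h : ℝ)) - 1)) := by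
  have hh0 : (0 : ℝ) < h := by positivity
  have hn1 : (1 : ℝ) < n := by exact_mod_cast hn
  have hn0 : (0 : ℝ) < n := by linarith
  set t : ℝ := (n : ℝ) ^ (1 / (h : ℝ)) with ht
  have ht1 : 1 < t := Real.one_lt_rpow hn1 (by positivity)
  have htn : (n : ℝ) = t ^ h := by
    rw [ht, one_div, Real.rpow_inv_natCast_pow hn0.le (by omega)]
  have ht0 : 0 < t := by linarith
  have ht' : t - 1 ≠ 0 := by linarith
  have ht'' : 1 - t ≠ 0 := by linarith
  have hi : t⁻¹ ≠ 1 := by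
    rw [Ne, inv_eq_one]
    exact ht1.ne'
  rw [Finset.sum_insert (by simp), pow_zero, Real.rpow_neg hn0.le, ← ht,
    geom_sum_Ico hi (by omega), htn]
  congr 1
  have hi' : t⁻¹ - 1 ≠ 0 := sub_ne_zero.2 hi
  rw [div_eq_div_iff hi' (by positivity)]
  have e1 : t⁻¹ ^ (2 * h) = (t ^ h)⁻¹ * (t ^ h)⁻¹ := by
    rw [two_mul, pow_add, inv_pow]
  have e2 : t⁻¹ ^ (h + 1) = (t ^ h)⁻¹ * t⁻¹ := by
    rw [pow_succ, inv_pow]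
  rw [e1, e2]
  have : t ^ h ≠ 0 := by positivity
  field_simp
  ring

/-! ### The norm -/

lemma mnorm_pos {P : Type*} {N : P → ℕ} (hN : ∀ p, 1 < N p) (m : P →₀ ℕ) : 0 < mnorm N m :=
  Finset.prod_pos fun p _ => pow_pos (by have := hN p; omega) _

lemma mnorm_add {P : Type*} (N : P → ℕ) (a b : P →₀ ℕ) :
    mnorm N (a + b) = mnorm N a * mnorm N b :=
  Finsupp.prod_add_index' (by simp) (by intros; exact pow_add _ _ _)

lemma mnorm_nsmul {P : Type*} (N : P → ℕ) (k : ℕ) (a : P →₀ ℕ) :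
    mnorm N (k • a) = mnorm N a ^ k := by
  induction k with
  | zero => simp [mnorm]
  | succ k ih => rw [succ_nsmul, mnorm_add, ih, pow_succ]

lemma mnorm_rpow {P : Type*} (N : P → ℕ) (s : ℝ) (b : P →₀ ℕ) :
    (mnorm N b : ℝ) ^ s = b.prod fun p k => ((N p : ℝ) ^ s) ^ k := by
  unfold mnorm Finsupp.prod
  push_cast
  rw [← Real.finsetProd_rpow _ _ (fun p _ => by positivity)]
  refine Finset.prod_congr rfl fun p _ => ?_
  rw [← Real.rpow_natCast, ← Real.rpow_natCast, ← Real.rpow_mul (by positivity),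
    ← Real.rpow_mul (by positivity), mul_comm]

/-! ### The decomposition `m = h • a + b` -/

/-- The multiplicity `k` of an `h`-full element contributes `bpart h k` to the factor `b` of
`m = h • a + b`; it is `0` or lies in `[h + 1, 2h - 1]`. -/
def bpart (h k : ℕ) : ℕ := if k % h = 0 then 0 else h + k % h

/-- The contribution of the multiplicity `k` of an `h`-full element to the factor `a` of
`m = h • a + b`. The truncated subtraction is exact for `k ≥ h`. -/
def apart (h k : ℕ) : ℕ := if k % h = 0 then k / h else k / h - 1

lemma bpart_mem {h : ℕ} (hh : 2 ≤ h) (k : ℕ) :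
    bpart h k ∈ insert 0 (Finset.Ico (h + 1) (2 * h)) := by
  have := Nat.mod_lt k (show 0 < h by omega)
  unfold bpart
  split_ifs <;> simp
  omega

lemma apart_bpart {h : ℕ} (hh : 2 ≤ h) (k : ℕ) (hk : k = 0 ∨ h ≤ k) :
    h * apart h k + bpart h k = k := by
  have e := Nat.div_add_mod k h
  unfold apart bpart
  split_ifs with h0
  · omega
  · have hk' : h ≤ k := by
      rcases hk with rfl | hk
      · simp at h0
      · exact hk
    obtain ⟨q, hq⟩ : ∃ q, k / h = q + 1 := ⟨k / h - 1, by
      have := Nat.div_pos hk' (by omega); omega⟩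
    rw [hq] at e ⊢
    rw [Nat.mul_add, Nat.mul_one] at e
    simp only [Nat.add_sub_cancel]
    omega

lemma bpart_add {h : ℕ} (i j : ℕ)
    (hj : j ∈ insert 0 (Finset.Ico (h + 1) (2 * h))) : bpart h (h * i + j) = j := by
  unfold bpart
  rw [Nat.mul_add_mod]
  simp only [Finset.mem_insert, Finset.mem_Ico] at hj
  rcases hj with rfl | hj
  · simp
  · have : j % h = j - h := by
      rw [Nat.mod_eq_sub_mod (by omega), Nat.mod_eq_of_lt (by omega)]
    rw [this, if_neg (by omega)]
    omega

/-- The number of `h`-full elements `m = h • a + b` of norm at most `x` with given `b` is the number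
of `a` with `N a ≤ (x / N b) ^ (1 / h)`. -/
lemma fiber_card {P : Type*} {N : P → ℕ} (hN : ∀ p, 1 < N p) {h : ℕ} (hh : 2 ≤ h)
    (b : P →₀ ℕ) (hb : ∀ p, b p ∈ insert 0 (Finset.Ico (h + 1) (2 * h))) (x : ℝ) (hx : 0 ≤ x) :
    {m : P →₀ ℕ | ((∀ p, m p = 0 ∨ h ≤ m p) ∧ (mnorm N m : ℝ) ≤ x) ∧
      m.mapRange (bpart h) (by simp [bpart]) = b}.ncard =
    {a : P →₀ ℕ | (mnorm N a : ℝ) ≤ (x / mnorm N b) ^ (1 / (h : ℝ))}.ncard := by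
  have hnb : (0 : ℝ) < mnorm N b := by exact_mod_cast mnorm_pos hN b
  have hh0 : (0 : ℝ) < h := by positivity
  have key : ∀ a : P →₀ ℕ, (mnorm N a : ℝ) ≤ (x / mnorm N b) ^ (1 / (h : ℝ)) ↔
      (mnorm N (h • a + b) : ℝ) ≤ x := by
    intro a
    rw [one_div, Real.le_rpow_inv_iff_of_pos (by positivity) (by positivity) hh0,
      Real.rpow_natCast, le_div_iff₀ hnb, mnorm_add, mnorm_nsmul]
    push_cast
    rfl
  have himg : {m : P →₀ ℕ | ((∀ p, m p = 0 ∨ h ≤ m p) ∧ (mnorm N m : ℝ) ≤ x) ∧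
      m.mapRange (bpart h) (by simp [bpart]) = b} =
      (fun a : P →₀ ℕ => h • a + b) ''
        {a : P →₀ ℕ | (mnorm N a : ℝ) ≤ (x / mnorm N b) ^ (1 / (h : ℝ))} := by
    ext m
    simp only [Set.mem_ofPred_eq, Set.mem_image]
    constructor
    · rintro ⟨⟨hf, hm⟩, rfl⟩
      have e : h • m.mapRange (apart h) (by simp [apart]) +
          m.mapRange (bpart h) (by simp [bpart]) = m := by
        ext p
        simpa using apart_bpart hh (m p) (hf p)
      refine ⟨m.mapRange (apart h) (by simp [apart]), ?_, e⟩
      rw [key, e]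
      exact hm
    · rintro ⟨a, ha, rfl⟩
      refine ⟨⟨fun p => ?_, (key a).1 ha⟩, ?_⟩
      · have := hb p
        simp only [Finset.mem_insert, Finset.mem_Ico] at this
        simp only [Finsupp.coe_add, Finsupp.coe_smul, Pi.add_apply, Pi.smul_apply, smul_eq_mul]
        rcases Nat.eq_zero_or_pos (a p) with h0 | h0
        · rw [h0]
          omega
        · right
          exact (Nat.le_mul_of_pos_right h h0).trans (Nat.le_add_right _ _)
      · ext p
        simpa using bpart_add (a p) (b p) (hb p)
  rw [himg, Set.ncard_image_of_injective]
  intro a a' haa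
  have h1 : h • a = h • a' := add_right_cancel haa
  ext p
  have h2 := DFunLike.congr_fun h1 p
  simp only [Finsupp.coe_smul, Pi.smul_apply, smul_eq_mul] at h2
  exact Nat.eq_of_mul_eq_mul_left (by omega) h2

/-! ### Consequences of the counting axiom -/

/-- The primes inherit the linear counting bound of the monoid, so `∑ (N p) ^ (-σ)` converges for
`σ > 1`. -/
lemma summable_norm_rpow {P : Type*} (N : P → ℕ) (hN : ∀ p, 1 < N p)
    (κ θ C : ℝ) (hθ1 : θ < 1) (hC : 0 ≤ C)
    (hcount : ∀ x : ℝ, 1 ≤ x →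
      {m : P →₀ ℕ | (mnorm N m : ℝ) ≤ x}.Finite ∧
      |({m : P →₀ ℕ | (mnorm N m : ℝ) ≤ x}.ncard : ℝ) - κ * x| ≤ C * x ^ θ)
    {σ : ℝ} (hσ : 1 < σ) : Summable fun p => (N p : ℝ) ^ (-σ) := by
  classical
  refine summable_of_card_le N (fun p => (hN p).le) (κ + C) (fun n hn u hu => ?_) hσ
  have hn1 : (1 : ℝ) ≤ n := by exact_mod_cast hn
  obtain ⟨hfin, hle⟩ := hcount n hn1
  have hcard : u.card ≤ {m : P →₀ ℕ | (mnorm N m : ℝ) ≤ n}.ncard := by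
    have hinj : Function.Injective fun p : P => Finsupp.single p 1 :=
      Finsupp.single_left_injective one_ne_zero
    rw [← Finset.card_image_of_injective u hinj, ← Set.ncard_coe_finset]
    refine Set.ncard_le_ncard ?_ hfin
    intro m hm
    simp only [Finset.coe_image, Set.mem_image, Finset.mem_coe] at hm
    obtain ⟨p, hp, rfl⟩ := hm
    have : mnorm N (Finsupp.single p 1) = N p := by simp [mnorm]
    simp only [Set.mem_ofPred_eq, this]
    exact_mod_cast hu p hp
  have hpow : (n : ℝ) ^ θ ≤ n := by
    simpa using Real.rpow_le_rpow_of_exponent_le hn1 hθ1.le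
  have := (abs_le.1 hle).2
  have h3 : C * (n : ℝ) ^ θ ≤ C * n := mul_le_mul_of_nonneg_left hpow hC
  have h4 : (u.card : ℝ) ≤ ({m : P →₀ ℕ | (mnorm N m : ℝ) ≤ n}.ncard : ℝ) := by
    exact_mod_cast hcard
  linarith

lemma setOf_mnorm_le_eq_empty {P : Type*} {N : P → ℕ} (hN : ∀ p, 1 < N p) {y : ℝ} (hy : y < 1) :
    {m : P →₀ ℕ | (mnorm N m : ℝ) ≤ y} = ∅ := by
  ext m
  have : (1 : ℝ) ≤ mnorm N m := by exact_mod_cast mnorm_pos hN m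
  simp only [Set.mem_ofPred_eq, Set.mem_empty_iff_false, iff_false]
  linarith

/-- The counting axiom extends to all `y > 0` and to every exponent in `[θ, 1]`: for `y < 1` the
count is zero and `κ y ≤ κ y ^ ν`. -/
lemma count_bound {P : Type*} (N : P → ℕ) (hN : ∀ p, 1 < N p)
    (κ θ C : ℝ) (hκ : 0 < κ) (hC : 0 ≤ C)
    (hcount : ∀ x : ℝ, 1 ≤ x →
      {m : P →₀ ℕ | (mnorm N m : ℝ) ≤ x}.Finite ∧
      |({m : P →₀ ℕ | (mnorm N m : ℝ) ≤ x}.ncard : ℝ) - κ * x| ≤ C * x ^ θ)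
    {ν : ℝ} (hν : θ ≤ ν) (hν1 : ν ≤ 1) {y : ℝ} (hy : 0 < y) :
    |({m : P →₀ ℕ | (mnorm N m : ℝ) ≤ y}.ncard : ℝ) - κ * y| ≤ (C + κ) * y ^ ν := by
  have hyν : 0 ≤ y ^ ν := by positivity
  rcases le_or_gt 1 y with h1 | h1
  · refine (hcount y h1).2.trans ?_
    have := mul_le_mul_of_nonneg_left (Real.rpow_le_rpow_of_exponent_le h1 hν) hC
    nlinarith
  · rw [setOf_mnorm_le_eq_empty hN h1]
    have h2 : y ≤ y ^ ν := by
      simpa using Real.rpow_le_rpow_of_exponent_ge hy h1.le hν1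
    have h3 : |((∅ : Set (P →₀ ℕ)).ncard : ℝ) - κ * y| = κ * y := by
      rw [Set.ncard_empty, Nat.cast_zero, zero_sub, abs_neg, abs_of_pos (by positivity)]
    rw [h3]
    nlinarith [mul_le_mul_of_nonneg_left h2 hκ.le, mul_nonneg hC hyν]

/-! ### Counting `h`-full elements -/

/-- The convolution identity `#{m h-full, N m ≤ x} = ∑_b A ((x / N b) ^ (1 / h))`. -/
lemma hfull_ncard_eq {P : Type*} {N : P → ℕ} (hN : ∀ p, 1 < N p) {h : ℕ} (hh : 2 ≤ h)
    (x : ℝ) (hx : 0 ≤ x) (hfin : {m : P →₀ ℕ | (mnorm N m : ℝ) ≤ x}.Finite) :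
    ({m : P →₀ ℕ | (∀ p, m p = 0 ∨ h ≤ m p) ∧ (mnorm N m : ℝ) ≤ x}.ncard : ℝ) =
      ∑' b : {b : P →₀ ℕ // ∀ p, b p ∈ insert 0 (Finset.Ico (h + 1) (2 * h))},
        ({a : P →₀ ℕ | (mnorm N a : ℝ) ≤ (x / mnorm N b.1) ^ (1 / (h : ℝ))}.ncard : ℝ) := by
  classical
  have hH : {m : P →₀ ℕ | (∀ p, m p = 0 ∨ h ≤ m p) ∧ (mnorm N m : ℝ) ≤ x}.Finite :=
    hfin.subset fun m hm => hm.2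
  let β : (P →₀ ℕ) → {b : P →₀ ℕ // ∀ p, b p ∈ insert 0 (Finset.Ico (h + 1) (2 * h))} :=
    fun m => ⟨m.mapRange (bpart h) (by simp [bpart]), fun p => by
      simpa only [Finsupp.mapRange_apply] using bpart_mem hh (m p)⟩
  have hfib : ∀ b, (hH.toFinset.filter fun m => β m = b).card =
      {a : P →₀ ℕ | (mnorm N a : ℝ) ≤ (x / mnorm N b.1) ^ (1 / (h : ℝ))}.ncard := by
    intro b
    rw [← fiber_card hN hh b.1 b.2 x hx, ← Set.ncard_coe_finset]
    congr 1
    ext m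
    simp [β, Subtype.ext_iff]
  rw [tsum_eq_sum (s := hH.toFinset.image β), Set.ncard_eq_toFinset_card _ hH,
    Finset.card_eq_sum_card_fiberwise (f := β) (t := hH.toFinset.image β)
      (fun m hm => by simpa using Finset.mem_image_of_mem β hm)]
  · push_cast
    exact Finset.sum_congr rfl fun b _ => by rw [hfib]
  · intro b hb
    rw [← hfib, Nat.cast_eq_zero, Finset.card_eq_zero, Finset.filter_eq_empty_iff]
    intro m hm hmb
    exact hb (hmb ▸ Finset.mem_image_of_mem β hm)

/-- Under the counting axiom, the number of `h`-full elements of norm at most `x` equals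
`κ γ_h x^{1/h} + O_h(x^{ν/h})` for some `ν < 1`, where
`γ_h = ∏_𝔭 (1 + (N(𝔭) − N(𝔭)^{1/h})/(N(𝔭)² (N(𝔭)^{1/h} − 1)))`. -/
theorem hfull_count {P : Type*} [Countable P]
    (N : P → ℕ) (hN : ∀ p, 1 < N p) (h : ℕ) (hh : 2 ≤ h)
    (κ : ℝ) (hκ : 0 < κ) (θ : ℝ) (hθ0 : 0 ≤ θ) (hθ1 : θ < 1) (C : ℝ)
    (hcount : ∀ x : ℝ, 1 ≤ x →
      {m : P →₀ ℕ | (mnorm N m : ℝ) ≤ x}.Finite ∧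
      |({m : P →₀ ℕ | (mnorm N m : ℝ) ≤ x}.ncard : ℝ) - κ * x| ≤ C * x ^ θ) :
    ∃ ν : ℝ, ν < 1 ∧ ∃ D : ℝ, ∀ x : ℝ, 2 ≤ x →
      {m : P →₀ ℕ | (∀ p, m p = 0 ∨ h ≤ m p) ∧ (mnorm N m : ℝ) ≤ x}.Finite ∧
      |({m : P →₀ ℕ | (∀ p, m p = 0 ∨ h ≤ m p) ∧ (mnorm N m : ℝ) ≤ x}.ncard : ℝ)
          - κ * (∏' p : P, (1 + ((N p : ℝ) - (N p : ℝ) ^ (1 / (h : ℝ)))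
              / ((N p : ℝ) ^ 2 * ((N p : ℝ) ^ (1 / (h : ℝ)) - 1))))
            * x ^ (1 / (h : ℝ))| ≤ D * x ^ (ν / (h : ℝ)) := by
  classical
  have hh0 : (0 : ℝ) < h := by positivity
  have hC : 0 ≤ C := by
    have := (abs_nonneg _).trans (hcount 1 le_rfl).2
    simpa using this
  set S : Finset ℕ := insert 0 (Finset.Ico (h + 1) (2 * h)) with hS
  have hSe : S.erase 0 = Finset.Ico (h + 1) (2 * h) := Finset.erase_insert (by simp)
  have heuler : ∀ s : ℝ, 0 < s → 1 < s * (h + 1) →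
      Summable (fun b : {b : P →₀ ℕ // ∀ p, b p ∈ S} => (mnorm N b.1 : ℝ) ^ (-s)) ∧
      HasProd (fun p => ∑ k ∈ S, ((N p : ℝ) ^ (-s)) ^ k)
        (∑' b : {b : P →₀ ℕ // ∀ p, b p ∈ S}, (mnorm N b.1 : ℝ) ^ (-s)) := by
    intro s hs0 hs
    simp only [mnorm_rpow]
    refine hasProd_euler _ (fun p => by positivity) S (by simp [hS]) ?_
    rw [hSe]
    refine summable_sum fun k hk => ?_
    have hk1 : ((h : ℝ) + 1) ≤ k := by exact_mod_cast (Finset.mem_Ico.1 hk).1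
    have hsk : 1 < s * k := hs.trans_le (mul_le_mul_of_nonneg_left hk1 hs0.le)
    refine (summable_norm_rpow N hN κ θ C hθ1 hC hcount hsk).congr fun p => ?_
    rw [← Real.rpow_natCast, ← Real.rpow_mul (by positivity), neg_mul]
  -- Any exponent in `(h / (h + 1), 1)` makes the error series converge.
  set ν : ℝ := max θ ((2 * h + 1) / (2 * h + 2)) with hν
  have hν1 : ν < 1 := max_lt hθ1 (by rw [div_lt_one (by positivity)]; linarith)
  have hν2 : (2 * (h : ℝ) + 1) / (2 * h + 2) ≤ ν := le_max_right _ _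
  have hν0 : 0 < ν := lt_of_lt_of_le (by positivity) hν2
  have hνh : 1 < ν / h * (h + 1) := by
    have h1 : (2 * (h : ℝ) + 1) ≤ ν * (2 * h + 2) := by
      rwa [div_le_iff₀ (by positivity)] at hν2
    rw [div_mul_eq_mul_div, lt_div_iff₀ hh0]
    linarith
  obtain ⟨hsν, -⟩ := heuler (ν / h) (by positivity) hνh
  obtain ⟨hs1, hp1⟩ := heuler (1 / h) (by positivity) (by
    rw [div_mul_eq_mul_div, lt_div_iff₀ hh0]
    linarith)
  have hγ := hp1.tprod_eq
  simp only [hS, local_factor _ h (hN _) hh] at hγ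
  refine ⟨ν, hν1, (C + κ) * ∑' b : {b : P →₀ ℕ // ∀ p, b p ∈ S},
    (mnorm N b.1 : ℝ) ^ (-(ν / h)), fun x hx => ?_⟩
  have hx0 : 0 < x := by linarith
  have hfin := (hcount x (by linarith)).1
  refine ⟨hfin.subset fun m hm => hm.2, ?_⟩
  rw [hfull_ncard_eq hN hh x hx0.le hfin, hγ]
  have hpos : ∀ b : P →₀ ℕ, (0 : ℝ) < mnorm N b := fun b => by exact_mod_cast mnorm_pos hN b
  have hpw : ∀ (s : ℝ) (b : P →₀ ℕ),
      (x / mnorm N b) ^ s = x ^ s * (mnorm N b : ℝ) ^ (-s) := by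
    intro s b
    rw [Real.div_rpow hx0.le (hpos b).le, Real.rpow_neg (hpos b).le, div_eq_mul_inv]
  have hbound : ∀ b : {b : P →₀ ℕ // ∀ p, b p ∈ S},
      ‖({a : P →₀ ℕ | (mnorm N a : ℝ) ≤ (x / mnorm N b.1) ^ (1 / (h : ℝ))}.ncard : ℝ) -
        κ * x ^ (1 / (h : ℝ)) * (mnorm N b.1 : ℝ) ^ (-(1 / (h : ℝ)))‖ ≤
      (C + κ) * x ^ (ν / h) * (mnorm N b.1 : ℝ) ^ (-(ν / h)) := by
    intro b
    have hq : 0 < x / (mnorm N b.1 : ℝ) := div_pos hx0 (hpos _)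
    have := count_bound N hN κ θ C hκ hC hcount (le_max_left θ _) hν1.le
      (y := (x / mnorm N b.1) ^ (1 / (h : ℝ))) (by positivity)
    rw [← hν, ← Real.rpow_mul hq.le, one_div_mul_eq_div, hpw (ν / h), ← mul_assoc] at this
    rw [Real.norm_eq_abs, mul_assoc, ← hpw]
    exact this
  have hmain := hs1.mul_left (κ * x ^ (1 / (h : ℝ)))
  have herr := hsν.mul_left ((C + κ) * x ^ (ν / h))
  have hdiff := Summable.of_norm_bounded herr hbound
  have hA : Summable fun b : {b : P →₀ ℕ // ∀ p, b p ∈ S} =>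
      ({a : P →₀ ℕ | (mnorm N a : ℝ) ≤ (x / mnorm N b.1) ^ (1 / (h : ℝ))}.ncard : ℝ) :=
    (hdiff.add hmain).congr fun b => by ring
  have hfinal := tsum_of_norm_bounded herr.hasSum hbound
  rw [hA.tsum_sub hmain, tsum_mul_left, tsum_mul_left, Real.norm_eq_abs] at hfinal
  calc _ = _ := by rw [mul_right_comm]
    _ ≤ _ := hfinal
    _ = _ := by ring
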